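/- For all integers n,d ≥ 1, C^d_n = Σ_α (−1)^{n−ℓ(α)} · binom(d−α_1, α_1−1) · Π_{i=2}^{ℓ(α)} binom(d+1−α_i, α_i), where the sum is over all compositions α = (α_1,…,α_{ℓ(α)}) of n whose largest part satisfies max(α) ≤ (d+1)/2. -/

import Mathlib

/-- Full binary trees (every internal node has exactly two children). -/
inductive BTree : Type
  | leaf : BTree
  | node : BTree → BTree → BTree
deriving DecidableEq

namespace BTree

/-- Number of leaves of a full binary tree. -/
def numLeaves : BTree → ℕ
  | leaf => 1
  | node l r => l.numLeaves + r.numLeaves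

/-- The list of pairs (left depth, right depth) of the leaves, in preorder. -/
def leafDepths : BTree → List (ℕ × ℕ)
  | leaf => [(0, 0)]
  | node l r =>
      (l.leafDepths.map fun p => (p.1 + 1, p.2)) ++ (r.leafDepths.map fun p => (p.1, p.2 + 1))

/-- The left depth sequence `ld(t)` of the leaves of `t`, in preorder. -/
def ld (t : BTree) : List ℕ := t.leafDepths.map Prod.fst

/-- The right depth sequence `rd(t)` of the leaves of `t`, in preorder. -/
def rd (t : BTree) : List ℕ := t.leafDepths.map Prod.snd

end BTree

/-- `b ~^d c` : the sequences have equal length and agree at every position where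
either entry is `< d`. -/
def DepthEq (d : ℕ) : List ℕ → List ℕ → Prop :=
  List.Forall₂ (fun a b => min a b < d → a = b)

/-- `b ~_k c` : entrywise congruence mod `k` (and equal length). -/
def ModListEq (k : ℕ) : List ℕ → List ℕ → Prop :=
  List.Forall₂ (fun a b => a % k = b % k)

/-- The relation `t ~ t'` iff `ld(t) ~^d ld(t')` and `rd(t) ~^e rd(t')`. -/
def DeRel (d e : ℕ) (t t' : BTree) : Prop :=
  DepthEq d t.ld t'.ld ∧ DepthEq e t.rd t'.rd

/-- The relation `t ~ t'` iff `ld(t) ~_k^d ld(t')` (i.e. `ld(t) ~_k ld(t')` and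
`ld(t) ~^d ld(t')`). -/
def DkRel (d k : ℕ) (t t' : BTree) : Prop :=
  ModListEq k t.ld t'.ld ∧ DepthEq d t.ld t'.ld

/-- `T_n`: full binary trees with `n+1` leaves. -/
def Tn (n : ℕ) : Type := {t : BTree // t.numLeaves = n + 1}

/-- `C^{d,e}_n`: the number of equivalence classes of the relation `DeRel d e` on `T_n`. -/
noncomputable def Cde (d e n : ℕ) : ℕ :=
  Nat.card (Quot (fun t t' : Tn n => DeRel d e t.1 t'.1))

/-- `C^d_{k,n}`: the number of equivalence classes of `ld(t) ~_k^d ld(t')` on `T_n`. -/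
noncomputable def Cdk (d k n : ℕ) : ℕ :=
  Nat.card (Quot (fun t t' : Tn n => DkRel d k t.1 t'.1))

namespace BTree

/-- Truncated left depth sequence. -/
def tr (d : ℕ) (t : BTree) : List ℕ := t.ld.map (fun a => min a d)

theorem tr_leaf (d : ℕ) : tr d leaf = [0] := by simp [tr, ld, leafDepths]

theorem tr_node (d : ℕ) (l r : BTree) :
    tr (d + 1) (node l r) = (tr d l).map (fun a => a + 1) ++ tr (d + 1) r := by
  simp [tr, ld, leafDepths, Function.comp_def]

theorem numLeaves_pos (t : BTree) : 0 < t.numLeaves := by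
  induction t with
  | leaf => simp [numLeaves]
  | node l r hl hr => simp [numLeaves]; omega

theorem length_leafDepths (t : BTree) : t.leafDepths.length = t.numLeaves := by
  induction t with
  | leaf => simp [numLeaves, leafDepths]
  | node l r hl hr => simp [numLeaves, leafDepths, hl, hr]

theorem length_tr (d : ℕ) (t : BTree) : (tr d t).length = t.numLeaves := by
  simp [tr, ld, length_leafDepths]

theorem rd_trunc (t : BTree) :
    t.rd.map (fun a => min a 1) = 0 :: List.replicate (t.numLeaves - 1) 1 := by
  induction t with
  | leaf => simp [rd, leafDepths, numLeaves]
  | node l r hl hr =>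
    have h1 : (node l r).rd.map (fun a => min a 1)
        = l.rd.map (fun a => min a 1) ++ List.replicate r.numLeaves 1 := by
      simp [rd, leafDepths, Function.comp_def, length_leafDepths]
    have := numLeaves_pos l
    rw [h1, hl, List.cons_append, List.replicate_append_replicate]
    simp only [numLeaves]
    congr 2
    omega

theorem tr_succ (d : ℕ) (t : BTree) : ∃ L : List ℕ, tr (d + 1) t = L ++ [0] ∧ 0 ∉ L := by
  induction t with
  | leaf => exact ⟨[], by simp [tr_leaf]⟩
  | node l r _ hr =>
    obtain ⟨L, h, h'⟩ := hr
    refine ⟨(tr d l).map (fun a => a + 1) ++ L, by simp [tr_node, h], by simp [h']⟩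

theorem tr_one (t : BTree) : tr 1 t = List.replicate (t.numLeaves - 1) 1 ++ [0] := by
  induction t with
  | leaf => simp [tr_leaf, numLeaves]
  | node l r _ hr =>
    have h1 : (tr 0 l).map (fun a => a + 1) = List.replicate l.numLeaves 1 := by
      simp [tr, ld, Function.comp_def, length_leafDepths]
    have := numLeaves_pos r
    rw [tr_node, hr, h1, ← List.append_assoc, List.replicate_append_replicate]
    simp only [numLeaves]
    congr 2
    omega

end BTree

open BTree

theorem depthEq_iff (d : ℕ) (l l' : List ℕ) :
    DepthEq d l l' ↔ l.map (fun a => min a d) = l'.map (fun a => min a d) := by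
  unfold DepthEq
  induction l generalizing l' with
  | nil => cases l' <;> simp
  | cons a l ih =>
    cases l' with
    | nil => simp
    | cons b l' =>
      simp only [List.forall₂_cons, List.map_cons, List.cons.injEq, ih]
      refine and_congr_left fun _ => ?_
      omega

/-- The set of truncated left depth sequences. -/
def Iset (d n : ℕ) : Set (List ℕ) := {L | ∃ t : BTree, t.numLeaves = n + 1 ∧ tr d t = L}

theorem Cde_eq (d n : ℕ) : Cde d 1 n = Nat.card (Iset d n) := by
  unfold Cde
  have key : ∀ t t' : Tn n, DeRel d 1 t.1 t'.1 ↔ tr d t.1 = tr d t'.1 := by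
    intro t t'
    unfold DeRel
    rw [depthEq_iff, depthEq_iff, rd_trunc, rd_trunc, t.2, t'.2]
    simp [tr]
  let f : Quot (fun t t' : Tn n => DeRel d 1 t.1 t'.1) → Iset d n :=
    Quot.lift (fun t => ⟨tr d t.1, t.1, t.2, rfl⟩) (by
      intro a b h
      exact Subtype.ext ((key a b).1 h))
  refine Nat.card_congr (Equiv.ofBijective f ⟨?_, ?_⟩)
  · intro a b
    induction a using Quot.ind with | _ a
    induction b using Quot.ind with | _ b
    intro h
    exact Quot.sound ((key a b).2 (congrArg Subtype.val h))
  · rintro ⟨L, t, ht, h⟩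
    exact ⟨Quot.mk _ ⟨t, ht⟩, Subtype.ext h⟩

theorem Iset_finite (d n : ℕ) : (Iset d n).Finite := by
  have h : Set.Finite {l : List (Fin (d + 1)) | l.length = n + 1} :=
    List.finite_length_eq _ _
  refine (h.image (fun l => l.map Fin.val)).subset ?_
  rintro L ⟨t, ht, rfl⟩
  refine ⟨t.ld.map (fun a => ⟨min a d, by omega⟩), ?_, ?_⟩
  · simp [ld, length_leafDepths, ht]
  · simp [tr, Function.comp_def]

instance (d n : ℕ) : Finite (Iset d n) := (Iset_finite d n).to_subtype

theorem exists_tree (n : ℕ) : ∃ t : BTree, t.numLeaves = n + 1 := by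
  induction n with
  | zero => exact ⟨leaf, rfl⟩
  | succ n ih =>
    obtain ⟨t, h⟩ := ih
    exact ⟨node leaf t, by simp [numLeaves, h]; omega⟩

theorem card_one (n : ℕ) : Nat.card (Iset 1 n) = 1 := by
  have : Iset 1 n = {List.replicate n 1 ++ [0]} := by
    ext L
    simp only [Iset, Set.mem_ofPred_eq, Set.mem_singleton_iff]
    constructor
    · rintro ⟨t, ht, rfl⟩
      rw [tr_one, ht]; rfl
    · rintro rfl
      obtain ⟨t, ht⟩ := exists_tree n
      exact ⟨t, ht, by rw [tr_one, ht]; rfl⟩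
  rw [this]; simp

theorem card_zero (d : ℕ) : Nat.card (Iset d 0) = 1 := by
  have : Iset d 0 = {[0]} := by
    ext L
    simp only [Iset, Set.mem_ofPred_eq, Set.mem_singleton_iff]
    constructor
    · rintro ⟨t, ht, rfl⟩
      cases t with
      | leaf => exact tr_leaf d
      | node l r =>
        have := numLeaves_pos l
        have := numLeaves_pos r
        simp [numLeaves] at ht
        omega
    · rintro rfl
      exact ⟨leaf, rfl, tr_leaf d⟩
  rw [this]; simp

theorem split_unique (a : ℕ) (L L' y y' : List ℕ) (h : a ∉ L) (h' : a ∉ L')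
    (e : L ++ a :: y = L' ++ a :: y') : L = L' ∧ y = y' := by
  induction L generalizing L' with
  | nil =>
    cases L' with
    | nil => simpa using e
    | cons c L' =>
      simp only [List.nil_append, List.cons_append, List.cons.injEq] at e
      exact absurd (by rw [e.1]; simp) h'
  | cons b L ih =>
    cases L' with
    | nil =>
      simp only [List.nil_append, List.cons_append, List.cons.injEq] at e
      exact absurd (by rw [e.1]; simp) h
    | cons c L' =>
      simp only [List.mem_cons, not_or, List.cons_append, List.cons.injEq] at *
      have := ih L' h.2 h'.2 e.2
      exact ⟨⟨e.1, this.1⟩, this.2⟩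

theorem card_rec (d n : ℕ) : Nat.card (Iset (d + 2) (n + 1)) =
    ∑ p ∈ Finset.HasAntidiagonal.antidiagonal n, Nat.card (Iset (d + 1) p.1) * Nat.card (Iset (d + 2) p.2) := by
  let f : (Σ p : Finset.HasAntidiagonal.antidiagonal n, Iset (d + 1) p.1.1 × Iset (d + 2) p.1.2) →
      Iset (d + 2) (n + 1) := fun x =>
    ⟨x.2.1.1.map (fun a => a + 1) ++ x.2.2.1, by
      obtain ⟨⟨p, hp⟩, ⟨_, l, hl, rfl⟩, ⟨_, r, hr, rfl⟩⟩ := x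
      rw [Finset.HasAntidiagonal.mem_antidiagonal] at hp
      refine ⟨node l r, ?_, tr_node _ _ _⟩
      simp only [numLeaves]
      simp only at hl hr
      omega⟩
  have hf : Function.Bijective f := by
    constructor
    · rintro ⟨⟨⟨i, j⟩, hp⟩, ⟨x, l, hl, hx⟩, ⟨y, r, hr, hy⟩⟩
        ⟨⟨⟨i', j'⟩, hp'⟩, ⟨x', l', hl', hx'⟩, ⟨y', r', hr', hy'⟩⟩ h
      have h' : x.map (fun a => a + 1) ++ y = x'.map (fun a => a + 1) ++ y' :=
        congrArg Subtype.val h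
      have hxl := length_tr (d + 1) l
      have hxl' := length_tr (d + 1) l'
      rw [hx, hl] at hxl
      rw [hx', hl'] at hxl'
      rw [Finset.HasAntidiagonal.mem_antidiagonal] at hp hp'
      simp only at hp hp' hxl hxl'
      obtain ⟨L, hL, hL0⟩ := tr_succ d l
      obtain ⟨L', hL', hL0'⟩ := tr_succ d l'
      rw [hx] at hL
      rw [hx'] at hL'
      have h3 : L.map (fun a => a + 1) ++ 1 :: y = L'.map (fun a => a + 1) ++ 1 :: y' := by
        simpa [hL, hL'] using h'
      have h4 := split_unique 1 _ _ y y' (by simpa using hL0) (by simpa using hL0') h3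
      have hLL : L = L' := List.map_injective_iff.2 (add_left_injective 1) h4.1
      have hxx : x = x' := by rw [hL, hL', hLL]
      have hyy : y = y' := h4.2
      subst hxx hyy
      have hi : i = i' := by omega
      subst hi
      have hj : j = j' := by omega
      subst hj
      rfl
    · rintro ⟨L, t, ht, h⟩
      cases t with
      | leaf => simp [numLeaves] at ht
      | node l r =>
        have h1 := numLeaves_pos l
        have h2 := numLeaves_pos r
        simp only [numLeaves] at ht
        refine ⟨⟨⟨(l.numLeaves - 1, r.numLeaves - 1), ?_⟩, ⟨tr (d + 1) l, l, ?_, rfl⟩,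
          ⟨tr (d + 2) r, r, ?_, rfl⟩⟩, ?_⟩
        · rw [Finset.HasAntidiagonal.mem_antidiagonal]; simp only; omega
        · simp only; omega
        · simp only; omega
        · exact Subtype.ext ((tr_node _ _ _).symm.trans h)
  rw [← Nat.card_congr (Equiv.ofBijective f hf), Nat.card_sigma]
  simp only [Nat.card_prod]
  exact Finset.sum_coe_sort (Finset.HasAntidiagonal.antidiagonal n)
    (fun p => Nat.card (Iset (d + 1) p.1) * Nat.card (Iset (d + 2) p.2))

/-! Power series -/

open PowerSeries in
/-- Fibonacci polynomials. -/
noncomputable def Gs (m : ℕ) : PowerSeries ℤ :=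
  PowerSeries.mk fun j => (-1) ^ j * ((m - j).choose j : ℤ)

theorem Gs_zero : Gs 0 = 1 := by
  ext j
  cases j <;> simp [Gs, PowerSeries.coeff_one]

theorem Gs_one : Gs 1 = 1 := by
  ext j
  cases j <;> simp [Gs, PowerSeries.coeff_one]

theorem Gs_rec (m : ℕ) : Gs (m + 2) = Gs (m + 1) - PowerSeries.X * Gs m := by
  ext j
  cases j with
  | zero => simp [Gs]
  | succ j =>
    simp only [Gs, map_sub, PowerSeries.coeff_mk, PowerSeries.coeff_succ_X_mul]
    have h : ((m + 2 - (j + 1)).choose (j + 1)) =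
        (m + 1 - (j + 1)).choose (j + 1) + (m - j).choose j := by
      rcases Nat.lt_or_ge m j with h | h
      · rw [Nat.choose_eq_zero_of_lt (by omega), Nat.choose_eq_zero_of_lt (by omega),
          Nat.choose_eq_zero_of_lt (by omega)]
      · have e1 : m + 2 - (j + 1) = (m - j) + 1 := by omega
        have e2 : m + 1 - (j + 1) = m - j := by omega
        rw [e1, e2, Nat.choose_succ_succ, Nat.succ_eq_add_one, add_comm]
    rw [h]; push_cast; ring

/-- Generating function of the class counts. -/
noncomputable def As (d : ℕ) : PowerSeries ℤ :=
  PowerSeries.mk fun n => (Nat.card (Iset d n) : ℤ)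

theorem As_one : As 1 * (1 - PowerSeries.X) = 1 := by
  have : As 1 = PowerSeries.mk 1 := by
    ext n; simp [As, card_one, -Nat.card_coe_set_eq]
  rw [this, PowerSeries.mk_one_mul_one_sub_eq_one]

theorem As_rec (d : ℕ) : As (d + 2) = 1 + PowerSeries.X * (As (d + 1) * As (d + 2)) := by
  ext n
  cases n with
  | zero => simp [As, card_zero, -Nat.card_coe_set_eq]
  | succ n =>
    rw [map_add, PowerSeries.coeff_succ_X_mul, PowerSeries.coeff_mul]
    simp [As, card_rec, -Nat.card_coe_set_eq, PowerSeries.coeff_one]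

theorem As_Gs (d : ℕ) : As (d + 1) * Gs (d + 2) = Gs (d + 1) := by
  induction d with
  | zero => rw [Gs_rec, Gs_one, Gs_zero, mul_one, As_one]
  | succ d ih =>
    have h := As_rec d
    rw [Gs_rec]
    linear_combination Gs (d + 2) * h + PowerSeries.X * As (d + 2) * ih

theorem sum_comp (n : ℕ) (f : List ℕ → ℤ) :
    ∑ α : Composition (n + 1), f α.blocks =
      ∑ p ∈ Finset.HasAntidiagonal.antidiagonal n, ∑ β : Composition p.2, f ((p.1 + 1) :: β.blocks) := by
  rw [Finset.sum_sigma']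
  symm
  refine Finset.sum_bij (fun x hx => ⟨(x.1.1 + 1) :: x.2.blocks, ?_, ?_⟩) ?_ ?_ ?_ ?_
  · intro i hi
    rcases List.mem_cons.1 hi with h | h
    · omega
    · exact x.2.blocks_pos h
  · have := (Finset.HasAntidiagonal.mem_antidiagonal.1 (Finset.mem_sigma.1 hx).1)
    rw [List.sum_cons, x.2.blocks_sum]; omega
  · intros; simp
  · rintro ⟨⟨i, j⟩, β⟩ h ⟨⟨i', j'⟩, β'⟩ h' e
    have e' := congrArg Composition.blocks e
    simp only [List.cons.injEq, add_left_inj] at e'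
    obtain ⟨rfl, e2⟩ := e'
    simp at h h'
    have : j = j' := by omega
    subst this
    have : β = β' := Composition.ext e2
    rw [this]
  · rintro ⟨L, hp, hs⟩ -
    cases L with
    | nil => simp at hs
    | cons a L =>
      have ha : 0 < a := hp (by simp)
      rw [List.sum_cons] at hs
      refine ⟨⟨(a - 1, L.sum), ⟨L, fun h => hp (List.mem_cons_of_mem _ h), rfl⟩⟩, ?_, ?_⟩
      · simp; omega
      · apply Composition.ext
        simp; omega
  · intros; rfl

/-- Weight of a block. -/
def wt (d a : ℕ) : ℤ := (-1) ^ (a - 1) * (((d + 1 - a).choose a : ℕ) : ℤ)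

/-- Generating function of weighted compositions. -/
noncomputable def Ws (d : ℕ) : PowerSeries ℤ :=
  PowerSeries.mk fun n => ∑ α : Composition n, (α.blocks.map (wt d)).prod

theorem comp_zero_blocks (α : Composition 0) : α.blocks = [] := by
  rcases h : α.blocks with _ | ⟨a, L⟩
  · rfl
  · have h1 := α.blocks_sum
    have h2 : 0 < a := α.blocks_pos (by rw [h]; simp)
    rw [h, List.sum_cons] at h1
    omega

theorem Ws_Gs (d : ℕ) : Ws d * Gs (d + 1) = 1 := by
  have h1 : Gs (d + 1) = 1 - PowerSeries.X * PowerSeries.mk (fun i => wt d (i + 1)) := by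
    ext j
    cases j with
    | zero => simp [Gs]
    | succ j =>
      simp [Gs, wt, PowerSeries.coeff_one, pow_succ]
  have h2 : Ws d = 1 + PowerSeries.X * (PowerSeries.mk (fun i => wt d (i + 1)) * Ws d) := by
    ext n
    cases n with
    | zero => simp [Ws, comp_zero_blocks, composition_card]
    | succ n =>
      rw [map_add, PowerSeries.coeff_succ_X_mul, PowerSeries.coeff_mul]
      simp only [Ws, PowerSeries.coeff_mk]
      rw [sum_comp n (fun L => (L.map (wt d)).prod)]
      simp [PowerSeries.coeff_one, Finset.mul_sum]
  rw [h1]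
  linear_combination h2

theorem sign_prod (L : List ℕ) (h : ∀ a ∈ L, 0 < a) :
    L.length ≤ L.sum ∧ (-1 : ℤ) ^ (L.sum - L.length) = (L.map fun a => (-1 : ℤ) ^ (a - 1)).prod := by
  induction L with
  | nil => simp
  | cons a L ih =>
    obtain ⟨h1, h2⟩ := ih fun b hb => h b (by simp [hb])
    have ha := h a (by simp)
    refine ⟨by simp; omega, ?_⟩
    rw [List.map_cons, List.prod_cons, ← h2, ← pow_add]
    congr 1
    simp; omega

/-- The summand. -/
def summand (d : ℕ) (L : List ℕ) : ℤ :=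
  (-1 : ℤ) ^ (L.headI - 1) * ((d - L.headI).choose (L.headI - 1) : ℤ) * (L.tail.map (wt d)).prod

theorem summand_eq (d n : ℕ) (hn : 1 ≤ n) (α : Composition n) :
    (-1 : ℤ) ^ (n - α.length) * ((d - α.blocks.headI).choose (α.blocks.headI - 1) : ℤ) *
          ((α.blocks.tail).map fun a => (((d + 1 - a).choose a : ℕ) : ℤ)).prod
      = summand d α.blocks := by
  have h := (sign_prod α.blocks (fun a ha => α.blocks_pos ha)).2
  have hs := α.blocks_sum
  rw [hs] at h
  change (-1 : ℤ) ^ (n - α.blocks.length) * _ * _ = _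
  rw [h]
  rcases hb : α.blocks with _ | ⟨a, L⟩
  · rw [hb] at hs; simp at hs; omega
  · simp only [summand, List.headI_cons, List.tail_cons, List.map_cons, List.prod_cons]
    have : (L.map (wt d)).prod = (L.map fun a => (-1 : ℤ) ^ (a - 1)).prod *
        (L.map fun a => (((d + 1 - a).choose a : ℕ) : ℤ)).prod := by
      rw [← List.prod_map_mul]; rfl
    rw [this]; ring

theorem summand_zero (d : ℕ) (hd : 1 ≤ d) (L : List ℕ) (h : ¬ ∀ a ∈ L, 2 * a ≤ d + 1) :
    summand d L = 0 := by
  push Not at h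
  obtain ⟨a, ha, h⟩ := h
  cases L with
  | nil => simp at ha
  | cons b L =>
    simp only [summand, List.headI_cons, List.tail_cons]
    rcases List.mem_cons.1 ha with rfl | ha
    · rw [Nat.choose_eq_zero_of_lt (by omega)]; simp
    · have : (L.map (wt d)).prod = 0 := by
        rw [List.prod_eq_zero_iff]
        refine List.mem_map.2 ⟨a, ha, ?_⟩
        unfold wt
        rw [Nat.choose_eq_zero_of_lt (by omega)]; simp
      rw [this, mul_zero]

theorem sum_summand (d n : ℕ) :
    ∑ α : Composition (n + 1), summand (d + 1) α.blocks =
      PowerSeries.coeff (n + 1) (PowerSeries.X * (Gs d * Ws (d + 1))) := by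
  rw [sum_comp n (summand (d + 1)), PowerSeries.coeff_succ_X_mul, PowerSeries.coeff_mul]
  simp [Gs, Ws, summand, Finset.mul_sum]

/-- for `n,d ≥ 1`,
`C^d_n = Σ_α (-1)^{n-ℓ(α)} binom(d-α₁, α₁-1) Π_{i=2}^{ℓ(α)} binom(d+1-α_i, α_i)`,
the sum being over all compositions `α` of `n` with `max(α) ≤ (d+1)/2`
(equivalently `2·α_i ≤ d+1` for every part `α_i`).  Here `C^d_n := C^{d,1}_n`. -/
theorem stmt5 (n d : ℕ) (hn : 1 ≤ n) (hd : 1 ≤ d) :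
    (Cde d 1 n : ℤ) =
      ∑ α ∈ Finset.univ.filter (fun α : Composition n => ∀ a ∈ α.blocks, 2 * a ≤ d + 1),
        (-1 : ℤ) ^ (n - α.length) * ((d - α.blocks.headI).choose (α.blocks.headI - 1) : ℤ) *
          ((α.blocks.tail).map fun a => (((d + 1 - a).choose a : ℕ) : ℤ)).prod := by
  obtain ⟨d, rfl⟩ : ∃ e, d = e + 1 := ⟨d - 1, by omega⟩
  obtain ⟨n, rfl⟩ : ∃ m, n = m + 1 := ⟨n - 1, by omega⟩
  have h1 : PowerSeries.X * (Gs d * Ws (d + 1)) = As (d + 1) - 1 := by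
    have hA := As_Gs d
    have hW := Ws_Gs (d + 1)
    have hG := Gs_rec d
    linear_combination (-Ws (d + 1)) * hA + (As (d + 1) - 1) * hW + Ws (d + 1) * hG
  have h2 : (Cde (d + 1) 1 (n + 1) : ℤ) = PowerSeries.coeff (n + 1) (As (d + 1) - 1) := by
    rw [Cde_eq]
    simp [As, PowerSeries.coeff_one]
  rw [h2, ← h1, ← sum_summand, Finset.sum_filter]
  refine Finset.sum_congr rfl fun α _ => ?_
  split_ifs with h
  · exact (summand_eq _ _ hn α).symm
  · exact summand_zero _ hd _ h
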